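/- For every integer s ≥ 0, every C^∞ function u, and every bounded open set 𝒰 ⊆ ℝ², there exists a constant C > 0 (depending on s, u and 𝒰) such that for all v ∈ C₀^∞(𝒰): Σ_{i=1}^{3} ‖X_i v‖_{H^s}² ≤ C ( |(P_u v, v)_{H^s}| + ‖v‖_{H^s}² ). -/

import Mathlib

open MeasureTheory

/-- Partial derivative in the first (x) coordinate. -/
noncomputable def pdx (f : ℝ × ℝ → ℝ) : ℝ × ℝ → ℝ :=
  fun p => deriv (fun x => f (x, p.2)) p.1

/-- Partial derivative in the second (t) coordinate. -/
noncomputable def pdt (f : ℝ × ℝ → ℝ) : ℝ × ℝ → ℝ :=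
  fun p => deriv (fun t => f (p.1, t)) p.2

/-- The mixed partial derivative ∂ₓ^{α₁} ∂ₜ^{α₂}. -/
noncomputable def pderiv2 (α : ℕ × ℕ) (f : ℝ × ℝ → ℝ) : ℝ × ℝ → ℝ :=
  pdx^[α.1] (pdt^[α.2] f)

/-- The set of multi-indices of order at most `s`. -/
def multiIdx (s : ℕ) : Finset (ℕ × ℕ) :=
  (Finset.range (s + 1) ×ˢ Finset.range (s + 1)).filter fun α => α.1 + α.2 ≤ s

/-- Squared L² norm on ℝ². -/
noncomputable def L2normSq (f : ℝ × ℝ → ℝ) : ℝ := ∫ p : ℝ × ℝ, (f p) ^ 2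

/-- The Sobolev H^s norm: (Σ_{|α|≤s} ‖∂^α v‖²_{L²})^{1/2}. -/
noncomputable def sobolevNorm (s : ℕ) (f : ℝ × ℝ → ℝ) : ℝ :=
  Real.sqrt (∑ α ∈ multiIdx s, L2normSq (pderiv2 α f))

/-- The Sobolev H^s inner product: Σ_{|α|≤s} (∂^α v, ∂^α w)_{L²}. -/
noncomputable def sobolevInner (s : ℕ) (f g : ℝ × ℝ → ℝ) : ℝ :=
  ∑ α ∈ multiIdx s, ∫ p : ℝ × ℝ, pderiv2 α f p * pderiv2 α g p

/-- The vector fields X₁ = ∂ₓ, X₂ = xʳ∂ₜ, X₃ = xʳ h̃(x,t,u(x,t)) ∂ₜ. -/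
noncomputable def Xvf (r : ℕ) (h : ℝ × ℝ × ℝ → ℝ) (u : ℝ × ℝ → ℝ) :
    Fin 3 → (ℝ × ℝ → ℝ) → (ℝ × ℝ → ℝ)
  | 0 => fun v => pdx v
  | 1 => fun v => fun p => p.1 ^ r * pdt v p
  | 2 => fun v => fun p => p.1 ^ r * h (p.1, p.2, u p) * pdt v p

/-- The operator P_u v = X₁²v + X₂²v + X₃²v. -/
noncomputable def Pop (r : ℕ) (h : ℝ × ℝ × ℝ → ℝ) (u : ℝ × ℝ → ℝ)
    (v : ℝ × ℝ → ℝ) : ℝ × ℝ → ℝ :=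
  fun p => Xvf r h u 0 (Xvf r h u 0 v) p + Xvf r h u 1 (Xvf r h u 1 v) p
    + Xvf r h u 2 (Xvf r h u 2 v) p

open scoped ContDiff

/-- Smooth functions. -/
def Sm (f : ℝ × ℝ → ℝ) : Prop := ContDiff ℝ ∞ f

/-- Smooth functions supported in K. -/
def Tk (K : Set (ℝ × ℝ)) (f : ℝ × ℝ → ℝ) : Prop := Sm f ∧ tsupport f ⊆ K

lemma Sm.diff {f : ℝ × ℝ → ℝ} (hf : Sm f) : Differentiable ℝ f :=
  ContDiff.differentiable hf (by simp)

lemma pdx_eq {f : ℝ × ℝ → ℝ} (hf : Sm f) : pdx f = fun p => fderiv ℝ f p (1, 0) := by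
  funext p
  have h1 : HasDerivAt (fun x : ℝ => ((x, p.2) : ℝ × ℝ)) (1, 0) p.1 :=
    (hasDerivAt_id p.1).prodMk (hasDerivAt_const p.1 p.2)
  have h2 : HasFDerivAt f (fderiv ℝ f p) ((fun x : ℝ => ((x, p.2) : ℝ × ℝ)) p.1) :=
    (hf.diff p).hasFDerivAt
  exact (h2.comp_hasDerivAt p.1 h1).deriv

lemma pdt_eq {f : ℝ × ℝ → ℝ} (hf : Sm f) : pdt f = fun p => fderiv ℝ f p (0, 1) := by
  funext p
  have h1 : HasDerivAt (fun x : ℝ => ((p.1, x) : ℝ × ℝ)) (0, 1) p.2 :=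
    (hasDerivAt_const p.2 p.1).prodMk (hasDerivAt_id p.2)
  have h2 : HasFDerivAt f (fderiv ℝ f p) ((fun x : ℝ => ((p.1, x) : ℝ × ℝ)) p.2) :=
    (hf.diff p).hasFDerivAt
  exact (h2.comp_hasDerivAt p.2 h1).deriv

lemma Sm.fd {f : ℝ × ℝ → ℝ} (hf : Sm f) : ContDiff ℝ ∞ (fderiv ℝ f) :=
  ContDiff.fderiv_right (m := ∞) hf (by simp)

lemma Sm.fdv {f : ℝ × ℝ → ℝ} (hf : Sm f) (w : ℝ × ℝ) : Sm (fun p => fderiv ℝ f p w) :=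
  ContDiff.clm_apply hf.fd contDiff_const

lemma Sm.pdx {f : ℝ × ℝ → ℝ} (hf : Sm f) : Sm (pdx f) := by
  rw [pdx_eq hf]; exact hf.fdv _

lemma Sm.pdt {f : ℝ × ℝ → ℝ} (hf : Sm f) : Sm (pdt f) := by
  rw [pdt_eq hf]; exact hf.fdv _

lemma Sm.add {f g : ℝ × ℝ → ℝ} (hf : Sm f) (hg : Sm g) : Sm (fun p => f p + g p) :=
  ContDiff.add hf hg

lemma Sm.sub {f g : ℝ × ℝ → ℝ} (hf : Sm f) (hg : Sm g) : Sm (fun p => f p - g p) :=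
  ContDiff.sub hf hg

lemma Sm.mul {f g : ℝ × ℝ → ℝ} (hf : Sm f) (hg : Sm g) : Sm (fun p => f p * g p) :=
  ContDiff.mul hf hg

lemma pd_comm {f : ℝ × ℝ → ℝ} (hf : Sm f) : pdt (pdx f) = pdx (pdt f) := by
  rw [pdt_eq hf.pdx, pdx_eq hf.pdt, pdx_eq hf, pdt_eq hf]
  funext p
  have h1 : IsSymmSndFDerivAt ℝ f p :=
    (ContDiff.contDiffAt hf).isSymmSndFDerivAt (by
      simp only [minSmoothness_of_isRCLikeNormedField]
      exact WithTop.coe_le_coe.2 (le_top : (2 : ℕ∞) ≤ ⊤))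
  have hd : DifferentiableAt ℝ (fderiv ℝ f) p := (hf.fd.differentiable (by simp)) p
  rw [fderiv_clm_apply hd (by fun_prop), fderiv_clm_apply hd (by fun_prop)]
  simpa using h1 (0, 1) (1, 0)

lemma pdx_add {f g : ℝ × ℝ → ℝ} (hf : Sm f) (hg : Sm g) :
    pdx (fun p => f p + g p) = fun p => pdx f p + pdx g p := by
  rw [pdx_eq (hf.add hg), pdx_eq hf, pdx_eq hg]
  funext p
  rw [fderiv_fun_add (hf.diff p) (hg.diff p)]; rfl

lemma pdt_add {f g : ℝ × ℝ → ℝ} (hf : Sm f) (hg : Sm g) :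
    pdt (fun p => f p + g p) = fun p => pdt f p + pdt g p := by
  rw [pdt_eq (hf.add hg), pdt_eq hf, pdt_eq hg]
  funext p
  rw [fderiv_fun_add (hf.diff p) (hg.diff p)]; rfl

lemma pdx_sub {f g : ℝ × ℝ → ℝ} (hf : Sm f) (hg : Sm g) :
    pdx (fun p => f p - g p) = fun p => pdx f p - pdx g p := by
  rw [pdx_eq (hf.sub hg), pdx_eq hf, pdx_eq hg]
  funext p
  rw [fderiv_fun_sub (hf.diff p) (hg.diff p)]; rfl

lemma pdt_sub {f g : ℝ × ℝ → ℝ} (hf : Sm f) (hg : Sm g) :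
    pdt (fun p => f p - g p) = fun p => pdt f p - pdt g p := by
  rw [pdt_eq (hf.sub hg), pdt_eq hf, pdt_eq hg]
  funext p
  rw [fderiv_fun_sub (hf.diff p) (hg.diff p)]; rfl

lemma pdx_mul {f g : ℝ × ℝ → ℝ} (hf : Sm f) (hg : Sm g) :
    pdx (fun p => f p * g p) = fun p => pdx f p * g p + f p * pdx g p := by
  rw [pdx_eq (hf.mul hg), pdx_eq hf, pdx_eq hg]
  funext p
  rw [fderiv_fun_mul (hf.diff p) (hg.diff p)]; simp; ring

lemma pdt_mul {f g : ℝ × ℝ → ℝ} (hf : Sm f) (hg : Sm g) :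
    pdt (fun p => f p * g p) = fun p => pdt f p * g p + f p * pdt g p := by
  rw [pdt_eq (hf.mul hg), pdt_eq hf, pdt_eq hg]
  funext p
  rw [fderiv_fun_mul (hf.diff p) (hg.diff p)]; simp; ring

lemma pderiv2_zero (f : ℝ × ℝ → ℝ) : pderiv2 (0, 0) f = f := rfl

lemma pderiv2_succx (a b : ℕ) (f : ℝ × ℝ → ℝ) :
    pderiv2 (a + 1, b) f = pdx (pderiv2 (a, b) f) := by
  simp [pderiv2, Function.iterate_succ_apply']

lemma pderiv2_succt0 (b : ℕ) (f : ℝ × ℝ → ℝ) :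
    pderiv2 (0, b + 1) f = pdt (pderiv2 (0, b) f) := by
  simp [pderiv2, Function.iterate_succ_apply']

/-- Induction principle over multi-indices. -/
lemma idx_induction {Q : ℕ × ℕ → Prop} (h0 : Q (0, 0))
    (ht : ∀ b, Q (0, b) → Q (0, b + 1)) (hx : ∀ a b, Q (a, b) → Q (a + 1, b)) (α : ℕ × ℕ) :
    Q α := by
  obtain ⟨a, b⟩ := α
  induction a with
  | zero =>
    induction b with
    | zero => exact h0
    | succ b ih => exact ht b ih
  | succ a ih => exact hx a b ih

lemma Sm.pderiv2 {f : ℝ × ℝ → ℝ} (hf : Sm f) (α : ℕ × ℕ) : Sm (pderiv2 α f) := by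
  induction α using idx_induction with
  | h0 => exact hf
  | ht b ih => rw [pderiv2_succt0]; exact ih.pdt
  | hx a b ih => rw [pderiv2_succx]; exact ih.pdx

lemma pdt_pderiv2 {f : ℝ × ℝ → ℝ} (hf : Sm f) (a b : ℕ) :
    pdt (pderiv2 (a, b) f) = pderiv2 (a, b + 1) f := by
  induction a with
  | zero => rw [pderiv2_succt0]
  | succ a ih => rw [pderiv2_succx, pderiv2_succx, pd_comm (hf.pderiv2 _), ih]

lemma pderiv2_pdx {f : ℝ × ℝ → ℝ} (hf : Sm f) (α : ℕ × ℕ) :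
    pderiv2 α (pdx f) = pdx (pderiv2 α f) := by
  induction α using idx_induction with
  | h0 => rfl
  | ht b ih => rw [pderiv2_succt0, pderiv2_succt0, ih, pd_comm (hf.pderiv2 _)]
  | hx a b ih => rw [pderiv2_succx, pderiv2_succx, ih]

lemma pderiv2_add {f g : ℝ × ℝ → ℝ} (hf : Sm f) (hg : Sm g) (α : ℕ × ℕ) :
    pderiv2 α (fun p => f p + g p) = fun p => pderiv2 α f p + pderiv2 α g p := by
  induction α using idx_induction with
  | h0 => rfl
  | ht b ih =>
    simp only [pderiv2_succt0]; rw [ih, pdt_add (hf.pderiv2 _) (hg.pderiv2 _)]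
  | hx a b ih =>
    simp only [pderiv2_succx]; rw [ih, pdx_add (hf.pderiv2 _) (hg.pderiv2 _)]

/-- Differential operators of order at most `s` with smooth coefficients. -/
inductive DO (s : ℕ) : ((ℝ × ℝ → ℝ) → (ℝ × ℝ → ℝ)) → Prop
  | mono (g : ℝ × ℝ → ℝ) (hg : Sm g) (a b : ℕ) (hab : a + b ≤ s) :
      DO s (fun f p => g p * pderiv2 (a, b) f p)
  | add (L M : (ℝ × ℝ → ℝ) → (ℝ × ℝ → ℝ)) (hL : DO s L) (hM : DO s M) :
      DO s (fun f p => L f p + M f p)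
  | congr (L M : (ℝ × ℝ → ℝ) → (ℝ × ℝ → ℝ)) (hL : DO s L)
      (h : ∀ f, Sm f → M f = L f) : DO s M

lemma DO.sm {s : ℕ} {L} (hL : DO s L) {f : ℝ × ℝ → ℝ} (hf : Sm f) : Sm (L f) := by
  induction hL with
  | mono g hg a b hab => exact hg.mul (hf.pderiv2 _)
  | add L M _ _ h1 h2 => exact h1.add h2
  | congr L M _ h ih => rw [h f hf]; exact ih

lemma DO.le {s s' : ℕ} (h : s ≤ s') {L} (hL : DO s L) : DO s' L := by
  induction hL with
  | mono g hg a b hab => exact DO.mono g hg a b (hab.trans h)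
  | add L M _ _ h1 h2 => exact DO.add _ _ h1 h2
  | congr L M _ h ih => exact DO.congr _ _ ih h

lemma DO.pdx {s : ℕ} {L} (hL : DO s L) : DO (s + 1) (fun f => pdx (L f)) := by
  induction hL with
  | mono g hg a b hab =>
    refine DO.congr _ _ (DO.add _ _ (DO.mono _ hg.pdx a b (by omega))
      (DO.mono g hg (a + 1) b (by omega))) fun f hf => ?_
    rw [pdx_mul hg (hf.pderiv2 _), pderiv2_succx]
  | add L M hL hM h1 h2 =>
    exact DO.congr _ _ (DO.add _ _ h1 h2) fun f hf => pdx_add (hL.sm hf) (hM.sm hf)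
  | congr L M _ h ih => exact DO.congr _ _ ih fun f hf => by rw [h f hf]

lemma DO.pdt {s : ℕ} {L} (hL : DO s L) : DO (s + 1) (fun f => pdt (L f)) := by
  induction hL with
  | mono g hg a b hab =>
    refine DO.congr _ _ (DO.add _ _ (DO.mono _ hg.pdt a b (by omega))
      (DO.mono g hg a (b + 1) (by omega))) fun f hf => ?_
    rw [pdt_mul hg (hf.pderiv2 _), pdt_pderiv2 hf]
  | add L M hL hM h1 h2 =>
    exact DO.congr _ _ (DO.add _ _ h1 h2) fun f hf => pdt_add (hL.sm hf) (hM.sm hf)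
  | congr L M _ h ih => exact DO.congr _ _ ih fun f hf => by rw [h f hf]

/-- The commutator of `∂^α` with `c ∂ₜ`. -/
noncomputable def Rc (c : ℝ × ℝ → ℝ) (α : ℕ × ℕ) (f : ℝ × ℝ → ℝ) : ℝ × ℝ → ℝ :=
  fun p => pderiv2 α (fun q => c q * pdt f q) p - c p * pdt (pderiv2 α f) p

lemma DO_Rc {c : ℝ × ℝ → ℝ} (hc : Sm c) (α : ℕ × ℕ) : DO (α.1 + α.2) (Rc c α) := by
  induction α using idx_induction with
  | h0 =>
    refine DO.congr _ _ (DO.mono (fun _ => 0) contDiff_const 0 0 (by simp)) fun f hf => ?_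
    funext p
    simp [Rc, pderiv2_zero]
  | ht b ih =>
    refine DO.congr _ _ (DO.add _ _ ih.pdt (DO.mono _ hc.pdt 0 (b + 1) (by simp))) fun f hf => ?_
    have hA := (hc.mul hf.pdt).pderiv2 (0, b)
    have hB := (hf.pderiv2 (0, b)).pdt
    funext p
    simp only [Rc]
    rw [show Rc c (0, b) f = fun p => pderiv2 (0, b) (fun q => c q * pdt f q) p
      - c p * pdt (pderiv2 (0, b) f) p from rfl, pdt_sub hA (hc.mul hB), pdt_mul hc hB, pderiv2_succt0, pderiv2_succt0]
    ring
  | hx a b ih =>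
    refine DO.congr _ _ (DO.add _ _ (ih.pdx.le (by simp only []; omega))
      (DO.mono _ hc.pdx a (b + 1) (by simp only []; omega))) fun f hf => ?_
    have hA := (hc.mul hf.pdt).pderiv2 (a, b)
    have hB := (hf.pderiv2 (a, b)).pdt
    funext p
    simp only [Rc]
    rw [show Rc c (a, b) f = fun p => pderiv2 (a, b) (fun q => c q * pdt f q) p
      - c p * pdt (pderiv2 (a, b) f) p from rfl, pdx_sub hA (hc.mul hB), pdx_mul hc hB, pderiv2_succx, pderiv2_succx, ← pdt_pderiv2 hf,
      pd_comm (hf.pderiv2 _)]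
    ring

/-! Supports and integrals -/

lemma Tk.pdx {K} {f : ℝ × ℝ → ℝ} (hf : Tk K f) : Tk K (pdx f) :=
  ⟨hf.1.pdx, by rw [pdx_eq hf.1]; exact (tsupport_fderiv_apply_subset ℝ _).trans hf.2⟩

lemma Tk.pdt {K} {f : ℝ × ℝ → ℝ} (hf : Tk K f) : Tk K (pdt f) :=
  ⟨hf.1.pdt, by rw [pdt_eq hf.1]; exact (tsupport_fderiv_apply_subset ℝ _).trans hf.2⟩

lemma Tk.mul {K} {g f : ℝ × ℝ → ℝ} (hg : Sm g) (hf : Tk K f) : Tk K (fun p => g p * f p) :=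
  ⟨hg.mul hf.1, tsupport_mul_subset_right.trans hf.2⟩

lemma Tk.add {K} {g f : ℝ × ℝ → ℝ} (hg : Tk K g) (hf : Tk K f) : Tk K (fun p => g p + f p) :=
  ⟨hg.1.add hf.1, (tsupport_add g f).trans (Set.union_subset hg.2 hf.2)⟩

lemma Tk.pderiv2 {K} {f : ℝ × ℝ → ℝ} (hf : Tk K f) (α : ℕ × ℕ) : Tk K (pderiv2 α f) := by
  induction α using idx_induction with
  | h0 => exact hf
  | ht b ih => rw [pderiv2_succt0]; exact ih.pdt
  | hx a b ih => rw [pderiv2_succx]; exact ih.pdx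

lemma DO.tk {s : ℕ} {L} (hL : DO s L) {K} {f : ℝ × ℝ → ℝ} (hf : Tk K f) : Tk K (L f) := by
  induction hL with
  | mono g hg a b hab => exact (hf.pderiv2 _).mul hg
  | add L M _ _ h1 h2 => exact h1.add h2
  | congr L M _ h ih => rw [h f hf.1]; exact ih

lemma Tk.int {K} (hK : IsCompact K) {f : ℝ × ℝ → ℝ} (hf : Tk K f) : Integrable f :=
  (ContDiff.continuous hf.1).integrable_of_hasCompactSupport
    (hK.of_isClosed_subset (isClosed_tsupport f) hf.2)

lemma Tk.int_mul {K} (hK : IsCompact K) {f g : ℝ × ℝ → ℝ} (hf : Tk K f) (hg : Tk K g) :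
    Integrable (fun p => f p * g p) := (hg.mul hf.1).int hK

lemma Tk.int_sq {K} (hK : IsCompact K) {f : ℝ × ℝ → ℝ} (hf : Tk K f) :
    Integrable (fun p => f p ^ 2) := by
  simpa [pow_two] using hf.int_mul hK hf

lemma L2normSq_nonneg (f : ℝ × ℝ → ℝ) : 0 ≤ L2normSq f :=
  integral_nonneg fun _ => sq_nonneg _

lemma sobolevNorm_sq (s : ℕ) (f : ℝ × ℝ → ℝ) :
    sobolevNorm s f ^ 2 = ∑ α ∈ multiIdx s, L2normSq (pderiv2 α f) :=
  Real.sq_sqrt (Finset.sum_nonneg fun _ _ => L2normSq_nonneg _)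

lemma L2_le_sobolev {s : ℕ} (f : ℝ × ℝ → ℝ) {α : ℕ × ℕ} (hα : α ∈ multiIdx s) :
    L2normSq (pderiv2 α f) ≤ sobolevNorm s f ^ 2 := by
  rw [sobolevNorm_sq]
  exact Finset.single_le_sum (f := fun α => L2normSq (pderiv2 α f))
    (fun _ _ => L2normSq_nonneg _) hα

lemma mem_multiIdx {s a b : ℕ} : (a, b) ∈ multiIdx s ↔ a + b ≤ s := by
  simp [multiIdx]; omega

lemma DO.bound {s : ℕ} {L} (hL : DO s L) {K : Set (ℝ × ℝ)} (hK : IsCompact K) :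
    ∃ C, 0 ≤ C ∧ ∀ f, Tk K f → L2normSq (L f) ≤ C * sobolevNorm s f ^ 2 := by
  induction hL with
  | mono g hg a b hab =>
    obtain ⟨M, hM⟩ := hK.exists_bound_of_continuousOn (ContDiff.continuous hg).continuousOn
    refine ⟨M ^ 2, sq_nonneg _, fun f hf => ?_⟩
    refine le_trans ?_ (mul_le_mul_of_nonneg_left
      (L2_le_sobolev f (mem_multiIdx.2 hab)) (sq_nonneg M))
    unfold L2normSq
    rw [← integral_const_mul]
    have hD := hf.pderiv2 (a, b)
    refine integral_mono ((hD.mul hg).int_sq hK) ((hD.int_sq hK).const_mul _) fun p => ?_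
    by_cases hp : p ∈ K
    · have h1 := hM p hp
      rw [Real.norm_eq_abs] at h1
      have h2 : g p ^ 2 ≤ M ^ 2 := by
        rw [← sq_abs (g p)]; exact pow_le_pow_left₀ (abs_nonneg _) h1 2
      simp only [mul_pow]
      exact mul_le_mul_of_nonneg_right h2 (sq_nonneg _)
    · have h0 : _root_.pderiv2 (a, b) f p = 0 := image_eq_zero_of_notMem_tsupport
        fun h => hp (hD.2 h)
      simp [h0]
  | add L M hL hM h1 h2 =>
    obtain ⟨C1, hC1, h1⟩ := h1
    obtain ⟨C2, hC2, h2⟩ := h2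
    refine ⟨2 * C1 + 2 * C2, by positivity, fun f hf => ?_⟩
    have e1 := h1 f hf
    have e2 := h2 f hf
    have hLf := hL.tk hf
    have hMf := hM.tk hf
    have : L2normSq (fun p => L f p + M f p) ≤ 2 * L2normSq (L f) + 2 * L2normSq (M f) := by
      unfold L2normSq
      rw [← integral_const_mul, ← integral_const_mul,
        ← integral_add ((hLf.int_sq hK).const_mul _) ((hMf.int_sq hK).const_mul _)]
      refine integral_mono ((hLf.add hMf).int_sq hK)
        (((hLf.int_sq hK).const_mul _).add ((hMf.int_sq hK).const_mul _)) fun p => ?_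
      simp only
      nlinarith [sq_nonneg (L f p - M f p)]
    linarith
  | congr L M _ h ih =>
    obtain ⟨C, hC, ih⟩ := ih
    exact ⟨C, hC, fun f hf => by rw [h f hf.1]; exact ih f hf⟩

lemma cs {K : Set (ℝ × ℝ)} (hK : IsCompact K) {f g : ℝ × ℝ → ℝ} (hf : Tk K f) (hg : Tk K g) :
    (∫ p, f p * g p) ^ 2 ≤ L2normSq f * L2normSq g := by
  have h := discrim_le_zero (a := L2normSq f) (b := 2 * ∫ p, f p * g p) (c := L2normSq g)
    fun x => by
      have h1 := (hf.int_sq hK).const_mul (x * x)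
      have h2 := (hf.int_mul hK hg).const_mul (2 * x)
      have : L2normSq f * (x * x) + 2 * (∫ p, f p * g p) * x + L2normSq g
          = ∫ p, (x * f p + g p) ^ 2 := by
        have e : ∀ p, (x * f p + g p) ^ 2
            = (x * x) * f p ^ 2 + (2 * x) * (f p * g p) + g p ^ 2 := fun p => by ring
        simp only [e]
        have h12 : Integrable (fun p => (x * x) * f p ^ 2 + (2 * x) * (f p * g p)) := h1.add h2
        rw [integral_add h12 (hg.int_sq hK), integral_add h1 h2, integral_const_mul,
          integral_const_mul]
        unfold L2normSq
        ring
      rw [this]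
      exact integral_nonneg fun _ => sq_nonneg _
  unfold discrim at h
  nlinarith

lemma sobolevNorm_nonneg (s : ℕ) (f : ℝ × ℝ → ℝ) : 0 ≤ sobolevNorm s f := Real.sqrt_nonneg _

/-- Cauchy-Schwarz for two operators of order `s`. -/
lemma DO.pair {s : ℕ} {L M} (hL : DO s L) (hM : DO s M) {K : Set (ℝ × ℝ)} (hK : IsCompact K) :
    ∃ C, 0 ≤ C ∧ ∀ f g, Tk K f → Tk K g →
      |∫ p, L f p * M g p| ≤ C * (sobolevNorm s f * sobolevNorm s g) := by
  obtain ⟨C1, hC1, h1⟩ := hL.bound hK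
  obtain ⟨C2, hC2, h2⟩ := hM.bound hK
  refine ⟨Real.sqrt (C1 * C2), Real.sqrt_nonneg _, fun f g hf hg => ?_⟩
  have hn := sobolevNorm_nonneg s f
  have hm := sobolevNorm_nonneg s g
  refine abs_le_of_sq_le_sq ?_ (by positivity)
  refine (cs hK (hL.tk hf) (hM.tk hg)).trans ?_
  rw [mul_pow, Real.sq_sqrt (by positivity)]
  calc _ ≤ (C1 * sobolevNorm s f ^ 2) * (C2 * sobolevNorm s g ^ 2) :=
        mul_le_mul (h1 f hf) (h2 g hg) (L2normSq_nonneg _) (by positivity)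
    _ = _ := by ring

lemma DO_pderiv2 {s a b : ℕ} (hab : a + b ≤ s) : DO s (pderiv2 (a, b)) :=
  DO.congr _ _ (DO.mono (fun _ => 1) contDiff_const a b hab) fun f _ => by funext p; simp

lemma ibp_x {K : Set (ℝ × ℝ)} (hK : IsCompact K) {f g : ℝ × ℝ → ℝ} (hf : Tk K f) (hg : Tk K g) :
    ∫ p, f p * pdx g p = - ∫ p, pdx f p * g p := by
  have h1 := hf.pdx.int_mul hK hg
  have h2 := hf.int_mul hK hg.pdx
  rw [pdx_eq hf.1] at h1 ⊢
  rw [pdx_eq hg.1] at h2 ⊢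
  exact integral_mul_fderiv_eq_neg_fderiv_mul_of_integrable h1 h2 (hf.int_mul hK hg)
    (fun x _ => hf.1.diff x) (fun x _ => hg.1.diff x)

lemma ibp_t {K : Set (ℝ × ℝ)} (hK : IsCompact K) {f g : ℝ × ℝ → ℝ} (hf : Tk K f) (hg : Tk K g) :
    ∫ p, f p * pdt g p = - ∫ p, pdt f p * g p := by
  have h1 := hf.pdt.int_mul hK hg
  have h2 := hf.int_mul hK hg.pdt
  rw [pdt_eq hf.1] at h1 ⊢
  rw [pdt_eq hg.1] at h2 ⊢
  exact integral_mul_fderiv_eq_neg_fderiv_mul_of_integrable h1 h2 (hf.int_mul hK hg)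
    (fun x _ => hf.1.diff x) (fun x _ => hg.1.diff x)

/-- The exact identity for one multi-index. -/
lemma identity_t {K : Set (ℝ × ℝ)} (hK : IsCompact K) {c : ℝ × ℝ → ℝ} (hc : Sm c) (α : ℕ × ℕ)
    {v w : ℝ × ℝ → ℝ} (hv : Tk K v) (hw : w = fun q => c q * pdt v q) :
    ∫ p, pderiv2 α (fun q => c q * pdt w q) p * pderiv2 α v p
      = - L2normSq (pderiv2 α w) + (∫ p, pderiv2 α w p * Rc c α v p)
        - (∫ p, pderiv2 α w p * (pdt c p * pderiv2 α v p)) + ∫ p, Rc c α w p * pderiv2 α v p := by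
  have hw' : Tk K w := by rw [hw]; exact hv.pdt.mul hc
  have hDv := hv.pderiv2 α
  have hDw := hw'.pderiv2 α
  have hRv := (DO_Rc hc α).tk hv
  have hRw := (DO_Rc hc α).tk hw'
  have e1 : ∀ p, pderiv2 α (fun q => c q * pdt w q) p * pderiv2 α v p
      = (c p * pderiv2 α v p) * pdt (pderiv2 α w) p + Rc c α w p * pderiv2 α v p := by
    intro p; simp only [Rc]; ring
  have e2 : ∀ p, pdt (fun q => c q * pderiv2 α v q) p * pderiv2 α w p
      = (pderiv2 α w p) ^ 2 - pderiv2 α w p * Rc c α v p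
        + pderiv2 α w p * (pdt c p * pderiv2 α v p) := by
    intro p
    rw [pdt_mul hc hDv.1]
    simp only [Rc]
    rw [← hw]; ring
  simp only [e1]
  rw [integral_add ((hDv.mul hc).int_mul hK hDw.pdt) (hRw.int_mul hK hDv),
    ibp_t hK (hDv.mul hc) hDw]
  simp only [e2]
  have h12 : Integrable (fun p => (pderiv2 α w p) ^ 2 - pderiv2 α w p * Rc c α v p) :=
    (hDw.int_sq hK).sub (hDw.int_mul hK hRv)
  rw [integral_add h12
    (hDw.int_mul hK (hDv.mul hc.pdt)), integral_sub (hDw.int_sq hK) (hDw.int_mul hK hRv)]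
  unfold L2normSq
  ring

lemma one_t {K : Set (ℝ × ℝ)} (hK : IsCompact K) {c : ℝ × ℝ → ℝ} (hc : Sm c) (s : ℕ) :
    ∃ C, 0 ≤ C ∧ ∀ v w, Tk K v → (w = fun q => c q * pdt v q) →
      |sobolevInner s (fun q => c q * pdt w q) v + sobolevNorm s w ^ 2|
        ≤ C * (sobolevNorm s w * sobolevNorm s v) := by
  have key : ∀ α : ℕ × ℕ, ∃ C, 0 ≤ C ∧ (α ∈ multiIdx s → ∀ v w, Tk K v →
      (w = fun q => c q * pdt v q) →
      |(∫ p, pderiv2 α (fun q => c q * pdt w q) p * pderiv2 α v p) + L2normSq (pderiv2 α w)|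
        ≤ C * (sobolevNorm s w * sobolevNorm s v)) := by
    rintro ⟨a, b⟩
    by_cases hab : a + b ≤ s
    · have hD : DO s (pderiv2 (a, b)) := DO_pderiv2 hab
      have hR : DO s (Rc c (a, b)) := (DO_Rc hc (a, b)).le hab
      obtain ⟨C1, hC1, h1⟩ := hD.pair hR hK
      obtain ⟨C2, hC2, h2⟩ := hD.pair (DO.mono _ hc.pdt a b hab) hK
      obtain ⟨C3, hC3, h3⟩ := hR.pair hD hK
      refine ⟨C1 + C2 + C3, by positivity, fun _ v w hv hw => ?_⟩
      have hw' : Tk K w := by rw [hw]; exact hv.pdt.mul hc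
      rw [identity_t hK hc (a, b) hv hw]
      have e1 := abs_le.1 (h1 w v hw' hv)
      have e2 := abs_le.1 (h2 w v hw' hv)
      have e3 := abs_le.1 (h3 w v hw' hv)
      rw [abs_le]
      constructor <;> linarith [e1.1, e1.2, e2.1, e2.2, e3.1, e3.2]
    · exact ⟨0, le_rfl, fun h => absurd (mem_multiIdx.1 h) hab⟩
  choose C hC hk using key
  refine ⟨∑ α ∈ multiIdx s, C α, Finset.sum_nonneg fun α _ => hC α, fun v w hv hw => ?_⟩
  rw [sobolevNorm_sq, sobolevInner, ← Finset.sum_add_distrib, Finset.sum_mul]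
  exact (Finset.abs_sum_le_sum_abs _ _).trans
    (Finset.sum_le_sum fun α hα => hk α hα v w hv hw)

lemma one_x {K : Set (ℝ × ℝ)} (hK : IsCompact K) (s : ℕ) {v : ℝ × ℝ → ℝ} (hv : Tk K v) :
    sobolevInner s (pdx (pdx v)) v = - sobolevNorm s (pdx v) ^ 2 := by
  rw [sobolevNorm_sq, sobolevInner, ← Finset.sum_neg_distrib]
  refine Finset.sum_congr rfl fun α _ => ?_
  rw [pderiv2_pdx hv.1.pdx, pderiv2_pdx hv.1]
  have := ibp_x hK (hv.pderiv2 α) (hv.pderiv2 α).pdx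
  simp only [mul_comm] at this ⊢
  rw [this]
  simp [L2normSq, pow_two]

lemma sobolevInner_add {K : Set (ℝ × ℝ)} (hK : IsCompact K) (s : ℕ) {f g v : ℝ × ℝ → ℝ}
    (hf : Tk K f) (hg : Tk K g) (hv : Tk K v) :
    sobolevInner s (fun p => f p + g p) v = sobolevInner s f v + sobolevInner s g v := by
  unfold sobolevInner
  rw [← Finset.sum_add_distrib]
  refine Finset.sum_congr rfl fun α _ => ?_
  rw [pderiv2_add hf.1 hg.1, ← integral_add ((hf.pderiv2 α).int_mul hK (hv.pderiv2 α))
    ((hg.pderiv2 α).int_mul hK (hv.pderiv2 α))]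
  simp only [add_mul]

/-- the subelliptic a priori estimate
Σᵢ ‖Xᵢv‖²_{H^s} ≤ C(|(P_u v, v)_{H^s}| + ‖v‖²_{H^s}) for v ∈ C₀^∞(𝒰). -/
theorem apriori_estimate_one
    (r : ℕ) (hr : 0 < r) (h : ℝ × ℝ × ℝ → ℝ) (hh : AnalyticOnNhd ℝ h Set.univ)
    (s : ℕ) (u : ℝ × ℝ → ℝ) (hu : ContDiff ℝ (⊤ : ℕ∞) u)
    (𝒰 : Set (ℝ × ℝ)) (h𝒰 : IsOpen 𝒰) (hb : Bornology.IsBounded 𝒰) :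
    ∃ C > 0, ∀ v : ℝ × ℝ → ℝ,
      ContDiff ℝ (⊤ : ℕ∞) v → HasCompactSupport v → tsupport v ⊆ 𝒰 →
      ∑ i : Fin 3, (sobolevNorm s (Xvf r h u i v)) ^ 2 ≤
        C * (|sobolevInner s (Pop r h u v) v| + (sobolevNorm s v) ^ 2) := by
  have hK : IsCompact (closure 𝒰) := hb.isCompact_closure
  have hc1 : Sm (fun p => p.1 ^ r) := ContDiff.pow contDiff_fst r
  have hh' : ContDiff ℝ ∞ h := hh.contDiff
  have hc2 : Sm (fun p => p.1 ^ r * h (p.1, p.2, u p)) :=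
    hc1.mul (hh'.comp (contDiff_fst.prodMk (contDiff_snd.prodMk hu)))
  obtain ⟨C1, hC1, k1⟩ := one_t hK hc1 s
  obtain ⟨C2, hC2, k2⟩ := one_t hK hc2 s
  refine ⟨2 + C1 ^ 2 + C2 ^ 2, by positivity, fun v hv _ hvs => ?_⟩
  have hT : Tk (closure 𝒰) v := ⟨hv, hvs.trans subset_closure⟩
  have e1 := k1 v (Xvf r h u 1 v) hT rfl
  have e2 := k2 v (Xvf r h u 2 v) hT rfl
  have e0 := one_x hK s hT
  have hw1 : Tk (closure 𝒰) (Xvf r h u 1 v) := hT.pdt.mul hc1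
  have hw2 : Tk (closure 𝒰) (Xvf r h u 2 v) := hT.pdt.mul hc2
  have hP : sobolevInner s (Pop r h u v) v = sobolevInner s (pdx (pdx v)) v
      + sobolevInner s (fun q => q.1 ^ r * pdt (Xvf r h u 1 v) q) v
      + sobolevInner s (fun q => q.1 ^ r * h (q.1, q.2, u q) * pdt (Xvf r h u 2 v) q) v := by
    rw [← sobolevInner_add hK s hT.pdx.pdx (hw1.pdt.mul hc1) hT,
      ← sobolevInner_add hK s (hT.pdx.pdx.add (hw1.pdt.mul hc1)) (hw2.pdt.mul hc2) hT]
    rfl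
  rw [Fin.sum_univ_three]
  change sobolevNorm s (pdx v) ^ 2 + _ + _ ≤ _
  rw [e0] at hP
  have a1 := (abs_le.1 e1).2
  have a2 := (abs_le.1 e2).2
  have hA := neg_abs_le (sobolevInner s (Pop r h u v) v)
  have hA0 := abs_nonneg (sobolevInner s (Pop r h u v) v)
  generalize |sobolevInner s (Pop r h u v) v| = A at *
  generalize sobolevInner s (Pop r h u v) v = A' at *
  generalize sobolevInner s (fun q => q.1 ^ r * pdt (Xvf r h u 1 v) q) v = B1 at *
  generalize sobolevInner s
    (fun q => q.1 ^ r * h (q.1, q.2, u q) * pdt (Xvf r h u 2 v) q) v = B2 at *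
  generalize sobolevNorm s (Xvf r h u 1 v) = n1 at *
  generalize sobolevNorm s (Xvf r h u 2 v) = n2 at *
  generalize sobolevNorm s (pdx v) = n0 at *
  generalize sobolevNorm s v = m at *
  have q1 : C1 * (n1 * m) ≤ n1 ^ 2 / 2 + C1 ^ 2 * m ^ 2 / 2 := by
    nlinarith [sq_nonneg (n1 - C1 * m)]
  have q2 : C2 * (n2 * m) ≤ n2 ^ 2 / 2 + C2 ^ 2 * m ^ 2 / 2 := by
    nlinarith [sq_nonneg (n2 - C2 * m)]
  have q3 : 0 ≤ (C1 ^ 2 + C2 ^ 2) * A := by positivity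
  have q4 := sq_nonneg m
  have q5 := sq_nonneg n0
  nlinarith
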